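/- arXiv:1404.0842 — 5 statements merged into one kernel-verified Lean document; each statement's English description precedes it below -/
import Mathlib

section
/- Let (A¹, B¹) be an n₁×m₁ bimatrix game, (A², B²) an n₂×m₂ bimatrix game, and let (A, B) be their product game. If (x¹, y¹) is a Nash equilibrium of (A¹, B¹) and (x², y²) is a Nash equilibrium of (A², B²), then (x, y) defined by x (i₁,i₂) = x¹ i₁ * x² i₂ and y (j₁,j₂) = y¹ j₁ * y² j₂ is a Nash equilibrium of (A, B). -/
open Finset

/-- A mixed strategy: nonnegative and sums to 1. -/
def IsMixed {n : Type*} [Fintype n] (x : n → ℝ) : Prop :=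
  (∀ i, 0 ≤ x i) ∧ ∑ i, x i = 1

/-- Expected payoff for the matrix `M` under strategies `x`, `y`. -/
def payoff {n m : Type*} [Fintype n] [Fintype m] (M : Matrix n m ℝ)
    (x : n → ℝ) (y : m → ℝ) : ℝ :=
  ∑ i, ∑ j, x i * M i j * y j

/-- Nash equilibrium of the bimatrix game `(A, B)`. -/
def IsNash {n m : Type*} [Fintype n] [Fintype m] (A B : Matrix n m ℝ)
    (x : n → ℝ) (y : m → ℝ) : Prop :=
  IsMixed x ∧ IsMixed y ∧
  (∀ x', IsMixed x' → payoff A x' y ≤ payoff A x y) ∧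
  (∀ y', IsMixed y' → payoff B x y' ≤ payoff B x y)

/-- The product game of two bimatrix games (one payoff matrix). -/
def prodGame {n₁ m₁ n₂ m₂ : Type*} (M₁ : Matrix n₁ m₁ ℝ) (M₂ : Matrix n₂ m₂ ℝ) :
    Matrix (n₁ × n₂) (m₁ × m₂) ℝ :=
  fun p q => M₁ p.1 q.1 + M₂ p.2 q.2

/-- One payoff matrix of the sum game via constant `c` on the off-diagonal blocks. -/
def sumGame {n₁ m₁ n₂ m₂ : Type*} (M₁ : Matrix n₁ m₁ ℝ) (M₂ : Matrix n₂ m₂ ℝ)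
    (c : ℝ) : Matrix (n₁ ⊕ n₂) (m₁ ⊕ m₂) ℝ :=
  fun i j => match i, j with
    | Sum.inl i, Sum.inl j => M₁ i j
    | Sum.inr i, Sum.inr j => M₂ i j
    | _, _ => c

def mg1 {n m : Type*} [Fintype m] (x : n × m → ℝ) : n → ℝ := fun i => ∑ j, x (i, j)

def mg2 {n m : Type*} [Fintype n] (x : n × m → ℝ) : m → ℝ := fun j => ∑ i, x (i, j)

lemma mg1_mixed {n m : Type*} [Fintype n] [Fintype m] {x : n × m → ℝ} (h : IsMixed x) :
    IsMixed (mg1 x) :=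
  ⟨fun _ => Finset.sum_nonneg fun _ _ => h.1 _, by
    rw [← h.2, Fintype.sum_prod_type]; rfl⟩

lemma mg2_mixed {n m : Type*} [Fintype n] [Fintype m] {x : n × m → ℝ} (h : IsMixed x) :
    IsMixed (mg2 x) :=
  ⟨fun _ => Finset.sum_nonneg fun _ _ => h.1 _, by
    rw [← h.2, Fintype.sum_prod_type_right]; rfl⟩

lemma mg1_prod {n m : Type*} [Fintype n] [Fintype m] (x : n → ℝ) (y : m → ℝ)
    (h : IsMixed y) : mg1 (fun p : n × m => x p.1 * y p.2) = x := by
  funext i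
  simp [mg1, ← Finset.mul_sum, h.2]

lemma mg2_prod {n m : Type*} [Fintype n] [Fintype m] (x : n → ℝ) (y : m → ℝ)
    (h : IsMixed x) : mg2 (fun p : n × m => x p.1 * y p.2) = y := by
  funext i
  simp [mg2, ← Finset.sum_mul, h.2]

lemma prod_mixed {n m : Type*} [Fintype n] [Fintype m] {x : n → ℝ} {y : m → ℝ}
    (hx : IsMixed x) (hy : IsMixed y) : IsMixed (fun p : n × m => x p.1 * y p.2) :=
  ⟨fun _ => mul_nonneg (hx.1 _) (hy.1 _), by
    rw [Fintype.sum_prod_type]; simp [← Finset.mul_sum, hx.2, hy.2]⟩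

lemma payoff_prod {n₁ m₁ n₂ m₂ : Type*} [Fintype n₁] [Fintype m₁] [Fintype n₂] [Fintype m₂]
    (M₁ : Matrix n₁ m₁ ℝ) (M₂ : Matrix n₂ m₂ ℝ) (x : n₁ × n₂ → ℝ) (y : m₁ × m₂ → ℝ) :
    payoff (prodGame M₁ M₂) x y =
      payoff M₁ (mg1 x) (mg1 y) + payoff M₂ (mg2 x) (mg2 y) := by
  have e1 : payoff M₁ (mg1 x) (mg1 y) = ∑ p, ∑ q, x p * M₁ p.1 q.1 * y q := by
    simp only [payoff, mg1, Fintype.sum_prod_type, Finset.sum_mul, Finset.mul_sum]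
    refine Finset.sum_congr rfl fun i _ => ?_
    rw [Finset.sum_comm (s := (Finset.univ : Finset n₂))]
    refine Finset.sum_congr rfl fun j _ => ?_
    rw [Finset.sum_comm]
  have e2 : payoff M₂ (mg2 x) (mg2 y) = ∑ p, ∑ q, x p * M₂ p.2 q.2 * y q := by
    simp only [payoff, mg2, Fintype.sum_prod_type_right, Finset.sum_mul, Finset.mul_sum]
    refine Finset.sum_congr rfl fun i _ => ?_
    rw [Finset.sum_comm (s := (Finset.univ : Finset n₁))]
    refine Finset.sum_congr rfl fun j _ => ?_
    rw [Finset.sum_comm]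
  rw [e1, e2]
  simp only [payoff, prodGame, mul_add, add_mul, Finset.sum_add_distrib]

theorem product_of_nash_is_nash {n₁ m₁ n₂ m₂ : ℕ}
    (A₁ B₁ : Matrix (Fin n₁) (Fin m₁) ℝ) (A₂ B₂ : Matrix (Fin n₂) (Fin m₂) ℝ)
    (x₁ : Fin n₁ → ℝ) (y₁ : Fin m₁ → ℝ) (x₂ : Fin n₂ → ℝ) (y₂ : Fin m₂ → ℝ)
    (h₁ : IsNash A₁ B₁ x₁ y₁) (h₂ : IsNash A₂ B₂ x₂ y₂) :
    IsNash (prodGame A₁ A₂) (prodGame B₁ B₂)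
      (fun p : Fin n₁ × Fin n₂ => x₁ p.1 * x₂ p.2)
      (fun q : Fin m₁ × Fin m₂ => y₁ q.1 * y₂ q.2) := by
  obtain ⟨hx1, hy1, a1, b1⟩ := h₁
  obtain ⟨hx2, hy2, a2, b2⟩ := h₂
  refine ⟨prod_mixed hx1 hx2, prod_mixed hy1 hy2, fun x' h => ?_, fun y' h => ?_⟩
  all_goals
    rw [payoff_prod, payoff_prod]
    simp only [mg1_prod _ _ hx2, mg1_prod _ _ hy2, mg2_prod _ _ hx1, mg2_prod _ _ hy1]
  · exact add_le_add (a1 _ (mg1_mixed h)) (a2 _ (mg2_mixed h))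
  · exact add_le_add (b1 _ (mg1_mixed h)) (b2 _ (mg2_mixed h))
end

section
/- Let (A¹, B¹) be an n₁×m₁ bimatrix game, (A², B²) an n₂×m₂ bimatrix game, and let (A, B) be their product game. If (x, y) is a Nash equilibrium of (A, B), then (x¹, y¹) given by the marginals x¹ i = ∑ l : Fin n₂, x (i, l) and y¹ j = ∑ l : Fin m₂, y (j, l) is a Nash equilibrium of (A¹, B¹). -/
open Finset

theorem payoff_prodGame_aux {n₁ m₁ n₂ m₂ : ℕ}
    (M₁ : Matrix (Fin n₁) (Fin m₁) ℝ) (M₂ : Matrix (Fin n₂) (Fin m₂) ℝ)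
    (x : Fin n₁ × Fin n₂ → ℝ) (y : Fin m₁ × Fin m₂ → ℝ) :
    payoff (prodGame M₁ M₂) x y =
      payoff M₁ (fun i => ∑ l, x (i, l)) (fun j => ∑ l, y (j, l)) +
      payoff M₂ (fun l => ∑ i, x (i, l)) (fun l => ∑ j, y (j, l)) := by
  have e1 : payoff M₁ (fun i => ∑ l, x (i, l)) (fun j => ∑ l, y (j, l)) =
      ∑ p : Fin n₁ × Fin n₂, ∑ q : Fin m₁ × Fin m₂, x p * M₁ p.1 q.1 * y q := by
    simp only [payoff, Fintype.sum_prod_type, Finset.sum_mul, Finset.mul_sum]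
    refine Finset.sum_congr rfl fun i _ => ?_
    conv_rhs => rw [Finset.sum_comm]
    refine Finset.sum_congr rfl fun j _ => ?_
    first
      | rfl
      | exact Finset.sum_comm
  have e2 : payoff M₂ (fun l => ∑ i, x (i, l)) (fun l => ∑ j, y (j, l)) =
      ∑ p : Fin n₁ × Fin n₂, ∑ q : Fin m₁ × Fin m₂, x p * M₂ p.2 q.2 * y q := by
    simp only [payoff, Fintype.sum_prod_type_right, Finset.sum_mul, Finset.mul_sum]
    refine Finset.sum_congr rfl fun i _ => ?_
    conv_rhs => rw [Finset.sum_comm]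
    refine Finset.sum_congr rfl fun j _ => ?_
    first
      | rfl
      | exact Finset.sum_comm
  rw [e1, e2, ← Finset.sum_add_distrib]
  simp only [payoff, prodGame]
  refine Finset.sum_congr rfl fun p _ => ?_
  rw [← Finset.sum_add_distrib]
  refine Finset.sum_congr rfl fun q _ => ?_
  ring

theorem marg_fst_aux {a b : ℕ} {x : Fin a × Fin b → ℝ} (h : IsMixed x) :
    IsMixed (fun i => ∑ l, x (i, l)) :=
  ⟨fun _ => Finset.sum_nonneg fun _ _ => h.1 _, by
    rw [← h.2, Fintype.sum_prod_type]⟩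

theorem marg_snd_aux {a b : ℕ} {x : Fin a × Fin b → ℝ} (h : IsMixed x) :
    IsMixed (fun l => ∑ i, x (i, l)) :=
  ⟨fun _ => Finset.sum_nonneg fun _ _ => h.1 _, by
    rw [← h.2, Fintype.sum_prod_type_right]⟩

theorem mixed_prod_aux {a b : ℕ} {u : Fin a → ℝ} {v : Fin b → ℝ} (hu : IsMixed u)
    (hv : IsMixed v) : IsMixed (fun p : Fin a × Fin b => u p.1 * v p.2) :=
  ⟨fun _ => mul_nonneg (hu.1 _) (hv.1 _), by
    simp only [Fintype.sum_prod_type, ← Finset.mul_sum, hv.2, mul_one, hu.2]⟩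

theorem nash_of_product_marginal_fst {n₁ m₁ n₂ m₂ : ℕ}
    (A₁ B₁ : Matrix (Fin n₁) (Fin m₁) ℝ) (A₂ B₂ : Matrix (Fin n₂) (Fin m₂) ℝ)
    (x : Fin n₁ × Fin n₂ → ℝ) (y : Fin m₁ × Fin m₂ → ℝ)
    (h : IsNash (prodGame A₁ A₂) (prodGame B₁ B₂) x y) :
    IsNash A₁ B₁ (fun i => ∑ l : Fin n₂, x (i, l)) (fun j => ∑ l : Fin m₂, y (j, l)) := by
  obtain ⟨hx, hy, hA, hB⟩ := h
  refine ⟨marg_fst_aux hx, marg_fst_aux hy, fun x' hx' => ?_, fun y' hy' => ?_⟩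
  · have hs := marg_snd_aux hx
    have := hA _ (mixed_prod_aux hx' hs)
    rw [payoff_prodGame_aux, payoff_prodGame_aux] at this
    simp only [← Finset.mul_sum, ← Finset.sum_mul, hs.2, hx'.2, mul_one, one_mul] at this
    linarith
  · have hs := marg_snd_aux hy
    have := hB _ (mixed_prod_aux hy' hs)
    rw [payoff_prodGame_aux, payoff_prodGame_aux] at this
    simp only [← Finset.mul_sum, ← Finset.sum_mul, hs.2, hy'.2, mul_one, one_mul] at this
    linarith
end

section
/- Let (A¹, B¹) be an n₁×m₁ bimatrix game, (A², B²) an n₂×m₂ bimatrix game (with n₁, m₁, n₂, m₂ ≥ 1), K a real constant with K > |A¹ i j|, |B¹ i j|, |A² i j|, |B² i j| for all entries, and let (A, B) be their sum game via K. If (x, y) is a Nash equilibrium of (A, B), then 0 < ∑ i : Fin n₁, x (Sum.inl i) < 1 and 0 < ∑ j : Fin m₁, y (Sum.inl j) < 1. -/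
open Finset

theorem aux_br {n : Type*} [Fintype n] (g x : n → ℝ) (hx : IsMixed x)
    (hb : ∀ x', IsMixed x' → ∑ i, x' i * g i ≤ ∑ i, x i * g i) (r s : n) (h : g r < g s) :
    x r = 0 := by
  classical
  have hrs : s ≠ r := by rintro rfl; exact lt_irrefl _ h
  have hr := hx.1 r
  have key := hb (fun i => x i + ((if i = s then x r else 0) - (if i = r then x r else 0))) ⟨by
    intro i
    have hi := hx.1 i
    by_cases h1 : i = r
    · subst h1
      simp [hrs.symm]
    · by_cases h2 : i = s
      · simp only [h2, if_true, hrs, if_false]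
        have := hx.1 s
        linarith
      · simpa [h1, h2] using hi, by
    simp [Finset.sum_add_distrib, Finset.sum_sub_distrib, hx.2]⟩
  simp only [add_mul, sub_mul, ite_mul, zero_mul, Finset.sum_add_distrib, Finset.sum_sub_distrib,
    Finset.sum_ite_eq', Finset.mem_univ, if_true] at key
  by_contra hne
  have hpos : 0 < x r := lt_of_le_of_ne hr (Ne.symm hne)
  nlinarith [mul_pos hpos (sub_pos.2 h)]

theorem aux_avg {m : Type*} [Fintype m] (a w : m → ℝ) (K : ℝ) (hw : ∀ j, 0 ≤ w j)
    (hs : ∑ j, w j = 1) (ha : ∀ j, a j < K) : ∑ j, a j * w j < K := by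
  have h0 : ∃ j ∈ Finset.univ, 0 < w j := by
    by_contra hc
    push Not at hc
    have := Finset.sum_nonpos hc
    linarith
  have : ∑ j, a j * w j < ∑ j, K * w j := by
    obtain ⟨j, hj, hp⟩ := h0
    exact Finset.sum_lt_sum (fun i _ => mul_le_mul_of_nonneg_right (ha i).le (hw i))
      ⟨j, hj, mul_lt_mul_of_pos_right (ha j) hp⟩
  rwa [← Finset.mul_sum, hs, mul_one] at this

theorem aux_avg' {m : Type*} [Fintype m] (a w : m → ℝ) (K : ℝ) (hw : ∀ j, 0 ≤ w j)
    (hs : ∑ j, w j = 1) (ha : ∀ j, -K < a j) : -K < ∑ j, a j * w j := by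
  have := aux_avg (fun j => - a j) w K hw hs (fun j => by linarith [ha j])
  simp only [neg_mul, Finset.sum_neg_distrib] at this
  linarith

theorem aux_zero {m : Type*} [Fintype m] (w : m → ℝ) (hw : ∀ j, 0 ≤ w j)
    (hs : ∑ j, w j = 0) : ∀ j, w j = 0 := by
  intro j
  exact (Finset.sum_eq_zero_iff_of_nonneg (fun i _ => hw i)).1 hs j (Finset.mem_univ j)

theorem sum_game_interior_mass {n₁ m₁ n₂ m₂ : ℕ}
    (hn₁ : 1 ≤ n₁) (hm₁ : 1 ≤ m₁) (hn₂ : 1 ≤ n₂) (hm₂ : 1 ≤ m₂)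
    (A₁ B₁ : Matrix (Fin n₁) (Fin m₁) ℝ) (A₂ B₂ : Matrix (Fin n₂) (Fin m₂) ℝ) (K : ℝ)
    (hA₁ : ∀ i j, |A₁ i j| < K) (hB₁ : ∀ i j, |B₁ i j| < K)
    (hA₂ : ∀ i j, |A₂ i j| < K) (hB₂ : ∀ i j, |B₂ i j| < K)
    (x : Fin n₁ ⊕ Fin n₂ → ℝ) (y : Fin m₁ ⊕ Fin m₂ → ℝ)
    (h : IsNash (sumGame A₁ A₂ K) (sumGame B₁ B₂ (-K)) x y) :
    (0 < ∑ i : Fin n₁, x (Sum.inl i) ∧ ∑ i : Fin n₁, x (Sum.inl i) < 1) ∧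
    (0 < ∑ j : Fin m₁, y (Sum.inl j) ∧ ∑ j : Fin m₁, y (Sum.inl j) < 1) := by
  obtain ⟨hx, hy, hrow, hcol⟩ := h
  have R := aux_br (fun i => ∑ j, sumGame A₁ A₂ K i j * y j) x hx (by
    intro x' hx'
    simpa only [payoff, Finset.mul_sum, mul_assoc] using hrow x' hx')
  have C := aux_br (fun j => ∑ i, sumGame B₁ B₂ (-K) i j * x i) y hy (by
    intro y' hy'
    have e : ∀ z : Fin m₁ ⊕ Fin m₂ → ℝ, payoff (sumGame B₁ B₂ (-K)) x z
        = ∑ j, z j * ∑ i, sumGame B₁ B₂ (-K) i j * x i := by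
      intro z
      unfold payoff
      rw [Finset.sum_comm]
      refine Finset.sum_congr rfl fun j _ => ?_
      rw [Finset.mul_sum]
      refine Finset.sum_congr rfl fun i _ => ?_
      ring
    have := hcol y' hy'
    rwa [e, e] at this)
  have hxs := hx.2
  have hys := hy.2
  rw [Fintype.sum_sum_type] at hxs hys
  have xl : ∀ i, 0 ≤ x (Sum.inl i) := fun i => hx.1 _
  have xr : ∀ i, 0 ≤ x (Sum.inr i) := fun i => hx.1 _
  have yl : ∀ i, 0 ≤ y (Sum.inl i) := fun i => hy.1 _
  have yr : ∀ i, 0 ≤ y (Sum.inr i) := fun i => hy.1 _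
  have pl := Finset.sum_nonneg (fun i (_ : i ∈ Finset.univ) => xl i)
  have pr := Finset.sum_nonneg (fun i (_ : i ∈ Finset.univ) => xr i)
  have ql := Finset.sum_nonneg (fun i (_ : i ∈ Finset.univ) => yl i)
  have qr := Finset.sum_nonneg (fun i (_ : i ∈ Finset.univ) => yr i)
  have c1 : ∑ i, x (Sum.inr i) = 0 → ∑ j, y (Sum.inr j) = 0 := by
    intro h0
    have h1 : ∑ i, x (Sum.inl i) = 1 := by linarith
    have z := aux_zero _ xr h0
    refine Finset.sum_eq_zero fun j _ => C (Sum.inr j) (Sum.inl ⟨0, hm₁⟩) ?_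
    simp only [Fintype.sum_sum_type, z, sumGame, mul_zero, Finset.sum_const_zero, add_zero,
      ← Finset.mul_sum, h1, mul_one]
    exact aux_avg' _ _ K xl h1 (fun i => (abs_lt.1 (hB₁ i _)).1)
  have c2 : ∑ i, x (Sum.inl i) = 0 → ∑ j, y (Sum.inl j) = 0 := by
    intro h0
    have h1 : ∑ i, x (Sum.inr i) = 1 := by linarith
    have z := aux_zero _ xl h0
    refine Finset.sum_eq_zero fun j _ => C (Sum.inl j) (Sum.inr ⟨0, hm₂⟩) ?_
    simp only [Fintype.sum_sum_type, z, sumGame, mul_zero, Finset.sum_const_zero, zero_add,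
      ← Finset.mul_sum, h1, mul_one]
    exact aux_avg' _ _ K xr h1 (fun i => (abs_lt.1 (hB₂ i _)).1)
  have r1 : ∑ j, y (Sum.inr j) = 0 → ∑ i, x (Sum.inl i) = 0 := by
    intro h0
    have h1 : ∑ j, y (Sum.inl j) = 1 := by linarith
    have z := aux_zero _ yr h0
    refine Finset.sum_eq_zero fun i _ => R (Sum.inl i) (Sum.inr ⟨0, hn₂⟩) ?_
    simp only [Fintype.sum_sum_type, z, sumGame, mul_zero, Finset.sum_const_zero, add_zero,
      ← Finset.mul_sum, h1, mul_one]
    exact aux_avg _ _ K yl h1 (fun j => (abs_lt.1 (hA₁ _ j)).2)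
  have r2 : ∑ j, y (Sum.inl j) = 0 → ∑ i, x (Sum.inr i) = 0 := by
    intro h0
    have h1 : ∑ j, y (Sum.inr j) = 1 := by linarith
    have z := aux_zero _ yl h0
    refine Finset.sum_eq_zero fun i _ => R (Sum.inr i) (Sum.inl ⟨0, hn₁⟩) ?_
    simp only [Fintype.sum_sum_type, z, sumGame, mul_zero, Finset.sum_const_zero, zero_add,
      ← Finset.mul_sum, h1, mul_one]
    exact aux_avg _ _ K yr h1 (fun j => (abs_lt.1 (hA₂ _ j)).2)
  have n1 : ∑ i, x (Sum.inr i) ≠ 0 := fun e => by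
    have := r1 (c1 e)
    linarith
  have n2 : ∑ i, x (Sum.inl i) ≠ 0 := fun e => by
    have := r2 (c2 e)
    linarith
  have n3 : ∑ j, y (Sum.inr j) ≠ 0 := fun e => n2 (r1 e)
  have n4 : ∑ j, y (Sum.inl j) ≠ 0 := fun e => n1 (r2 e)
  have g1 := lt_of_le_of_ne pr n1.symm
  have g2 := lt_of_le_of_ne pl n2.symm
  have g3 := lt_of_le_of_ne qr n3.symm
  have g4 := lt_of_le_of_ne ql n4.symm
  exact ⟨⟨g2, by linarith⟩, ⟨g4, by linarith⟩⟩
end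

section
/- Let (A¹, B¹) be an n₁×m₁ bimatrix game, (A², B²) an n₂×m₂ bimatrix game with n₁, m₁, n₂, m₂ ≥ 1, K a real constant with K > |A¹ i j|, |B¹ i j|, |A² i j|, |B² i j| for all entries, and let (A, B) be their sum game via K. Then (A, B) has no strictly dominated rows and no strictly dominated columns: there are no rows r ≠ r' with A r' c > A r c for every column c, and no columns c ≠ c' with B r c' > B r c for every row r. -/
open Finset

/-- Row `r` is strictly dominated by row `r'` in the game `(A, _)`. -/
def RowDominated {n m : Type*} (A : Matrix n m ℝ) (r r' : n) : Prop :=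
  ∀ c, A r c < A r' c

/-- Column `c` is strictly dominated by column `c'` in the game `(_, B)`. -/
def ColDominated {n m : Type*} (B : Matrix n m ℝ) (c c' : m) : Prop :=
  ∀ r, B r c < B r c'

theorem sum_game_no_strictly_dominated {n₁ m₁ n₂ m₂ : ℕ}
    (hn₁ : 1 ≤ n₁) (hm₁ : 1 ≤ m₁) (hn₂ : 1 ≤ n₂) (hm₂ : 1 ≤ m₂)
    (A₁ B₁ : Matrix (Fin n₁) (Fin m₁) ℝ) (A₂ B₂ : Matrix (Fin n₂) (Fin m₂) ℝ) (K : ℝ)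
    (hA₁ : ∀ i j, |A₁ i j| < K) (hB₁ : ∀ i j, |B₁ i j| < K)
    (hA₂ : ∀ i j, |A₂ i j| < K) (hB₂ : ∀ i j, |B₂ i j| < K) :
    (¬ ∃ r r' : Fin n₁ ⊕ Fin n₂, r ≠ r' ∧ RowDominated (sumGame A₁ A₂ K) r r') ∧
    (¬ ∃ c c' : Fin m₁ ⊕ Fin m₂, c ≠ c' ∧ ColDominated (sumGame B₁ B₂ (-K)) c c') := by
  have a₁ := fun i j => abs_lt.1 (hA₁ i j)
  have a₂ := fun i j => abs_lt.1 (hA₂ i j)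
  have b₁ := fun i j => abs_lt.1 (hB₁ i j)
  have b₂ := fun i j => abs_lt.1 (hB₂ i j)
  constructor
  · rintro ⟨r | r, r' | r', -, h⟩
    · have := h (Sum.inr ⟨0, hm₂⟩)
      simp [sumGame] at this
    · have := h (Sum.inr ⟨0, hm₂⟩)
      simp only [sumGame] at this
      linarith [(a₂ r' ⟨0, hm₂⟩).2]
    · have := h (Sum.inl ⟨0, hm₁⟩)
      simp only [sumGame] at this
      linarith [(a₁ r' ⟨0, hm₁⟩).2]
    · have := h (Sum.inl ⟨0, hm₁⟩)
      simp [sumGame] at this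
  · rintro ⟨c | c, c' | c', -, h⟩
    · have := h (Sum.inr ⟨0, hn₂⟩)
      simp [sumGame] at this
    · have := h (Sum.inl ⟨0, hn₁⟩)
      simp only [sumGame] at this
      linarith [(b₁ ⟨0, hn₁⟩ c).1]
    · have := h (Sum.inr ⟨0, hn₂⟩)
      simp only [sumGame] at this
      linarith [(b₂ ⟨0, hn₂⟩ c).1]
    · have := h (Sum.inl ⟨0, hn₁⟩)
      simp [sumGame] at this
end

section
/- Let (A¹, B¹) be an n₁×m₁ bimatrix game, (A², B²) an n₂×m₂ bimatrix game, and let (A, B) be their product game. If row (i₁, i₂) is strictly dominated by row (i₁', i₂') in (A, B), then row i₁ is strictly dominated by row i₁' in (A¹, B¹), or row i₂ is strictly dominated by row i₂' in (A², B²). The analogous statement holds for columns: if column (j₁, j₂) is strictly dominated by column (j₁', j₂') in (A, B), then column j₁ is strictly dominated by j₁' in (A¹, B¹) or column j₂ is strictly dominated by j₂' in (A², B²). -/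
open Finset

theorem dominated_in_product_dominated_in_factor {n₁ m₁ n₂ m₂ : ℕ}
    (A₁ B₁ : Matrix (Fin n₁) (Fin m₁) ℝ) (A₂ B₂ : Matrix (Fin n₂) (Fin m₂) ℝ) :
    (∀ (i₁ i₁' : Fin n₁) (i₂ i₂' : Fin n₂),
      RowDominated (prodGame A₁ A₂) (i₁, i₂) (i₁', i₂') →
        RowDominated A₁ i₁ i₁' ∨ RowDominated A₂ i₂ i₂') ∧
    (∀ (j₁ j₁' : Fin m₁) (j₂ j₂' : Fin m₂),
      ColDominated (prodGame B₁ B₂) (j₁, j₂) (j₁', j₂') →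
        ColDominated B₁ j₁ j₁' ∨ ColDominated B₂ j₂ j₂') := by
  constructor
  · intro i₁ i₁' i₂ i₂' h
    by_contra hc
    simp only [RowDominated, not_or, not_forall, not_lt] at hc
    obtain ⟨⟨a, ha⟩, ⟨b, hb⟩⟩ := hc
    have := h (a, b)
    simp only [prodGame] at this
    linarith
  · intro j₁ j₁' j₂ j₂' h
    by_contra hc
    simp only [ColDominated, not_or, not_forall, not_lt] at hc
    obtain ⟨⟨a, ha⟩, ⟨b, hb⟩⟩ := hc
    have := h (a, b)
    simp only [prodGame] at this
    linarith
end
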